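/- arXiv:1710.06760 — 4 statements merged into one kernel-verified Lean document; each statement's English description precedes it below -/
import Mathlib

section
/- For every irrational real number α there exist a constant C > 0 and a sequence (γ_j)_{j≥1} of real numbers with |γ_j| ≤ C j^{1/2} for all j ≥ 1, such that the set of integers j ≥ 1 for which √(α² j² + γ_j²) is an integer is infinite. In particular, for all constants C' > 0 and θ > 0 there are infinitely many j with inf_{τ ∈ ℤ} |τ + √(α² j² + γ_j²)| < C' j^{−θ}, i.e. the Diophantine condition ensuring global hypoellipticity of the perturbed operator D_t + α D_x + 𝓡 fails. -/
/-- For any irrational `α` there is a perturbation sequence `γ_j` of order `1/2`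
such that `√(α² j² + γ_j²)` is an integer infinitely often; in particular the
Diophantine condition for global hypoellipticity fails. -/
theorem stmt2 (α : ℝ) (hα : Irrational α) :
    ∃ C > (0:ℝ), ∃ γ : ℕ → ℝ,
      (∀ j : ℕ, 1 ≤ j → |γ j| ≤ C * (j:ℝ) ^ ((1:ℝ)/2)) ∧
      {j : ℕ | 1 ≤ j ∧ ∃ n : ℤ, Real.sqrt (α^2 * j^2 + γ j ^ 2) = n}.Infinite ∧
      ∀ C' > (0:ℝ), ∀ θ > (0:ℝ),
        {j : ℕ | 1 ≤ j ∧ ∃ τ : ℤ,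
          |(τ:ℝ) + Real.sqrt (α^2 * j^2 + γ j ^ 2)| < C' * (j:ℝ) ^ (-θ)}.Infinite := by
  have h0 : ∀ j : ℕ, 0 ≤ |α| * (j:ℝ) := fun j => by positivity
  have h1 : ∀ j : ℕ, |α| * (j:ℝ) ≤ (⌈|α| * (j:ℝ)⌉ : ℝ) := fun j => Int.le_ceil _
  have h2 : ∀ j : ℕ, (⌈|α| * (j:ℝ)⌉ : ℝ) < |α| * (j:ℝ) + 1 := fun j => Int.ceil_lt_add_one _
  have h3 : ∀ j : ℕ, α^2 * (j:ℝ)^2 = (|α| * (j:ℝ))^2 := fun j => by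
    rw [mul_pow, sq_abs]
  have key : ∀ j : ℕ, Real.sqrt (α^2 * j^2 +
      (Real.sqrt ((⌈|α| * (j:ℝ)⌉ : ℝ)^2 - α^2 * (j:ℝ)^2)) ^ 2) = (⌈|α| * (j:ℝ)⌉ : ℝ) := by
    intro j
    have := h0 j
    have := h1 j
    rw [Real.sq_sqrt (by rw [h3]; nlinarith), add_sub_cancel, Real.sqrt_sq (by linarith)]
  have inf : (Set.Ici (1:ℕ)).Infinite := Set.Ici_infinite 1
  refine ⟨Real.sqrt (2 * |α| + 1), by positivity,
    fun j => Real.sqrt ((⌈|α| * (j:ℝ)⌉ : ℝ)^2 - α^2 * (j:ℝ)^2), ?_, ?_, ?_⟩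
  · intro j hj
    have hj' : (1:ℝ) ≤ j := by exact_mod_cast hj
    have a := h0 j
    have b := h1 j
    have c := h2 j
    rw [abs_of_nonneg (Real.sqrt_nonneg _), ← Real.sqrt_eq_rpow,
      ← Real.sqrt_mul (by positivity)]
    apply Real.sqrt_le_sqrt
    rw [h3]
    nlinarith
  · refine inf.mono fun j hj => ⟨hj, _, key j⟩
  · intro C' hC' θ hθ
    refine inf.mono fun j hj => ⟨hj, -⌈|α| * (j:ℝ)⌉, ?_⟩
    have hj' : (0:ℝ) < j := by
      have : 1 ≤ j := hj
      exact_mod_cast this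
    rw [key j]
    push_cast
    rw [neg_add_cancel, abs_zero]
    positivity
end

section
/- Let d ≥ 1 and let A, B be d×d complex matrices. Suppose σ₀ ∈ ℂ is a simple eigenvalue of A (a root of multiplicity one of the characteristic polynomial of A) with eigenvector v₀ ≠ 0. Then there exists ε₀ > 0 and functions σ : {ε ∈ ℂ : |ε| < ε₀} → ℂ and v : {ε ∈ ℂ : |ε| < ε₀} → ℂ^d, both analytic on this disc, such that σ(0) = σ₀, v(0) = v₀, and for every |ε| < ε₀: v(ε) ≠ 0, (A + εB) v(ε) = σ(ε) v(ε), and σ(ε) is a simple eigenvalue of A + εB. -/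
open Filter Topology ContDiff in
theorem aux_contDiff_det {d : ℕ} (M : ℂ × ℂ → Matrix (Fin d) (Fin d) ℂ)
    (h : ∀ i j, ContDiff ℂ ω (fun p => M p i j)) : ContDiff ℂ ω (fun p => (M p).det) := by
  simp only [Matrix.det_apply']
  refine ContDiff.sum fun s _ => contDiff_const.mul (contDiff_prod fun i _ => h _ _)

open Filter Topology ContDiff in
theorem aux_contDiff_adj {d : ℕ} (M : ℂ × ℂ → Matrix (Fin d) (Fin d) ℂ)
    (h : ∀ i j, ContDiff ℂ ω (fun p => M p i j)) (i j : Fin d) :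
    ContDiff ℂ ω (fun p => (M p).adjugate i j) := by
  simp only [Matrix.adjugate_apply]
  apply aux_contDiff_det
  intro k l
  simp only [Matrix.updateRow_apply]
  split_ifs
  · exact contDiff_const
  · exact h k l

theorem aux_simple_iff {p : Polynomial ℂ} (hp : p ≠ 0) (z : ℂ) :
    p.rootMultiplicity z = 1 ↔ p.eval z = 0 ∧ p.derivative.eval z ≠ 0 := by
  have h1 := Polynomial.one_lt_rootMultiplicity_iff_isRoot (t := z) hp
  have h2 := Polynomial.rootMultiplicity_pos hp (x := z)
  simp only [Polynomial.IsRoot.def] at h1 h2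
  constructor
  · intro h
    have : p.eval z = 0 := h2.1 (by omega)
    refine ⟨this, fun h' => ?_⟩
    have := h1.2 ⟨this, h'⟩
    omega
  · rintro ⟨h, h'⟩
    have a := h2.2 h
    have : ¬ (1 < p.rootMultiplicity z) := fun hh => h' (h1.1 hh).2
    omega

theorem aux_adj {d : ℕ} (A : Matrix (Fin d) (Fin d) ℂ) (σ₀ : ℂ)
    (h0 : A.charpoly.eval σ₀ = 0)
    (v₀ : Fin d → ℂ) (heig : A.mulVec v₀ = σ₀ • v₀) :
    (Matrix.scalar (Fin d) σ₀ - A).adjugate.mulVec v₀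
      = (A.charpoly.derivative.eval σ₀) • v₀ := by
  obtain ⟨q, hq⟩ := Polynomial.dvd_iff_isRoot.2 h0
  have hd : A.charpoly.derivative.eval σ₀ = q.eval σ₀ := by
    rw [hq]; simp [Polynomial.derivative_mul]
  rw [hd]
  have key : (fun z : ℂ => (Matrix.scalar (Fin d) z - A).adjugate.mulVec v₀)
      = fun z => q.eval z • v₀ := by
    refine Continuous.ext_on (dense_compl_singleton σ₀) ?_ ?_ ?_
    · refine Continuous.matrix_mulVec (Continuous.matrix_adjugate ?_) continuous_const
      refine Continuous.sub ?_ continuous_const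
      exact (continuous_pi fun _ => continuous_id).matrix_diagonal
    · exact q.continuous.smul continuous_const
    · intro z hz
      have hz' : z - σ₀ ≠ 0 := sub_ne_zero.2 hz
      have e1 : (Matrix.scalar (Fin d) z - A).mulVec v₀ = (z - σ₀) • v₀ := by
        rw [Matrix.sub_mulVec, heig, sub_smul]
        congr 1
        ext i
        simp [Matrix.mulVec_diagonal]
      have e2 : (Matrix.scalar (Fin d) z - A).adjugate.mulVec
          ((Matrix.scalar (Fin d) z - A).mulVec v₀) = ((z - σ₀) * q.eval z) • v₀ := by
        rw [Matrix.mulVec_mulVec, Matrix.adjugate_mul, ← Matrix.eval_charpoly, hq,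
          Matrix.smul_mulVec, Matrix.one_mulVec]
        simp
      rw [e1, Matrix.mulVec_smul, mul_smul] at e2
      exact smul_right_injective _ hz' e2
  exact congrFun key σ₀

open Filter Topology ContDiff in

/-- Analytic perturbation of a simple eigenvalue: a simple eigenvalue `σ₀` of `A`
with eigenvector `v₀` extends to analytic families `σ(ε)`, `v(ε)` of simple
eigenvalues and eigenvectors of `A + εB`. -/
theorem stmt6 (d : ℕ) (hd : 1 ≤ d) (A B : Matrix (Fin d) (Fin d) ℂ)
    (σ₀ : ℂ) (hsimple : Polynomial.rootMultiplicity σ₀ (Matrix.charpoly A) = 1)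
    (v₀ : Fin d → ℂ) (hv₀ : v₀ ≠ 0) (heig : A.mulVec v₀ = σ₀ • v₀) :
    ∃ ε₀ > (0:ℝ), ∃ σ : ℂ → ℂ, ∃ v : ℂ → (Fin d → ℂ),
      AnalyticOnNhd ℂ σ (Metric.ball 0 ε₀) ∧ AnalyticOnNhd ℂ v (Metric.ball 0 ε₀) ∧
      σ 0 = σ₀ ∧ v 0 = v₀ ∧
      ∀ ε : ℂ, ‖ε‖ < ε₀ →
        v ε ≠ 0 ∧ (A + ε • B).mulVec (v ε) = σ ε • v ε ∧
        Polynomial.rootMultiplicity (σ ε) (Matrix.charpoly (A + ε • B)) = 1 := by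
  have hd0 := (aux_simple_iff A.charpoly_monic.ne_zero σ₀).1 hsimple
  obtain ⟨h0, h1⟩ := hd0
  set c := A.charpoly.derivative.eval σ₀ with hc
  let M : ℂ × ℂ → Matrix (Fin d) (Fin d) ℂ :=
    fun p => Matrix.scalar (Fin d) p.2 - (A + p.1 • B)
  have hM : ∀ i j, ContDiff ℂ ω (fun p => M p i j) := by
    intro i j
    have : (fun p => M p i j) =
        fun p : ℂ × ℂ => (if i = j then p.2 else 0) - (A i j + p.1 * B i j) := by
      funext p
      simp [M, Matrix.diagonal_apply]
    rw [this]
    split_ifs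
    · fun_prop
    · fun_prop
  let f : ℂ × ℂ → ℂ := fun p => (M p).det
  have hf : ContDiff ℂ ω f := aux_contDiff_det M hM
  have hfe : ∀ p, f p = (A + p.1 • B).charpoly.eval p.2 := fun p => by
    rw [Matrix.eval_charpoly]
  have hfd : ∀ p, fderiv ℂ f p (0, 1) = (A + p.1 • B).charpoly.derivative.eval p.2 := by
    intro p
    have hh : HasFDerivAt f (fderiv ℂ f (p.1, p.2)) (p.1, p.2) :=
      (hf.differentiable (by simp)).differentiableAt.hasFDerivAt
    have e : HasDerivAt (fun z : ℂ => (p.1, z)) ((0 : ℂ), (1 : ℂ)) p.2 :=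
      (hasDerivAt_const p.2 p.1).prodMk (hasDerivAt_id p.2)
    have e2 := hh.comp_hasDerivAt p.2 e
    have e3 := (A + p.1 • B).charpoly.hasDerivAt p.2
    refine HasDerivAt.unique e2 (e3.congr_of_eventuallyEq ?_)
    exact Eventually.of_forall fun z => hfe (p.1, z)
  have cdf : ContDiffAt ℂ ω f (0, σ₀) := hf.contDiffAt
  have hd1 : fderiv ℂ f (0, σ₀) (0, 1) = c := by rw [hfd]; simp [hc]
  have if₂ : (fderiv ℂ f (0, σ₀) ∘L .inr ℂ ℂ ℂ).IsInvertible := by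
    refine ⟨ContinuousLinearEquiv.unitsEquivAut ℂ (Units.mk0 c h1), ?_⟩
    ext
    simp [hd1]
  let σ := cdf.implicitFunction (by simp) if₂
  have hσ0 : σ 0 = σ₀ := cdf.implicitFunction_apply_self (by simp) if₂
  have hσf : ∀ᶠ x in 𝓝 (0 : ℂ), f (x, σ x) = f (0, σ₀) :=
    cdf.eventually_apply_implicitFunction (by simp) if₂
  have hσc : ContDiffAt ℂ ω σ 0 := cdf.contDiffAt_implicitFunction (by simp) if₂
  have hpair : ContDiffAt ℂ ω (fun x => (x, σ x)) (0 : ℂ) := contDiffAt_id.prodMk hσc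
  let v : ℂ → Fin d → ℂ := fun x => c⁻¹ • (M (x, σ x)).adjugate.mulVec v₀
  have hvc : ContDiffAt ℂ ω v 0 := by
    refine ContDiffAt.const_smul _ (contDiffAt_pi.2 fun i => ?_)
    simp only [Matrix.mulVec, dotProduct]
    refine ContDiffAt.sum fun j _ => ContDiffAt.mul ?_ contDiffAt_const
    exact (aux_contDiff_adj M hM i j).contDiffAt.comp (0 : ℂ) hpair
  have hv0 : v 0 = v₀ := by
    have := aux_adj A σ₀ h0 v₀ heig
    simp only [v, hσ0, M, zero_smul, add_zero]
    rw [this, smul_smul, inv_mul_cancel₀ h1, one_smul]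
  have hder : ∀ᶠ x in 𝓝 (0 : ℂ), fderiv ℂ f (x, σ x) (0, 1) ≠ 0 := by
    have hcont : ContinuousAt (fun x => fderiv ℂ f (x, σ x) (0, 1)) (0 : ℂ) := by
      have h2 : Continuous (fun p => fderiv ℂ f p (0, 1)) :=
        (hf.continuous_fderiv (by simp)).clm_apply continuous_const
      exact ContinuousAt.comp (f := fun x => (x, σ x)) h2.continuousAt hpair.continuousAt
    refine hcont.eventually_ne ?_
    rw [hσ0, hd1]; exact h1
  have hvne : ∀ᶠ x in 𝓝 (0 : ℂ), v x ≠ 0 :=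
    hvc.continuousAt.eventually_ne (by rw [hv0]; exact hv₀)
  have hall := hσf.and (hder.and (hvne.and
    (hσc.analyticAt.eventually_analyticAt.and hvc.analyticAt.eventually_analyticAt)))
  obtain ⟨r, hr, hball⟩ := Metric.eventually_nhds_iff_ball.1 hall
  refine ⟨r, hr, σ, v, fun x hx => (hball x hx).2.2.2.1, fun x hx => (hball x hx).2.2.2.2,
    hσ0, hv0, fun x hx => ?_⟩
  obtain ⟨a1, a2, a3, -, -⟩ := hball x (by simpa using hx)
  have a1' : f (x, σ x) = 0 := by
    rw [a1, hfe]; simpa using h0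
  refine ⟨a3, ?_, ?_⟩
  · have e : (M (x, σ x)).mulVec (v x) = 0 := by
      simp only [v]
      rw [Matrix.mulVec_smul, Matrix.mulVec_mulVec, Matrix.mul_adjugate]
      have : (M (x, σ x)).det = 0 := a1'
      rw [this]; simp
    simp only [M, Matrix.sub_mulVec] at e
    rw [← sub_eq_zero.1 e]
    ext i
    simp [Matrix.mulVec_diagonal]
  · rw [aux_simple_iff (Matrix.charpoly_monic _).ne_zero]
    refine ⟨?_, ?_⟩
    · rw [← hfe (x, σ x)]; exact a1'
    · rw [← hfd (x, σ x)]; exact a2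
end

section
/- Let 0 ≤ δ < 1, C > 0, and let ω be a nonzero real number. Let (γ_j)_{j≥1} be real numbers with |γ_j| ≤ C j^δ for all j ≥ 1, and let (a_k)_{k≥1} be real numbers with |a_k| ≤ 1/2 for all k ≥ 1. Then there exist η > 0, ε₀ > 0 and integers j₀, N ≥ 1 such that for all integers j ≥ j₀ and all real ε with |ε| < ε₀, the series Σ_{k=N+1}^{∞} |γ_j|^{2k} |a_k| |ε|^{2k} / (|ω| j)^{2k−1} converges and its sum is at most j^{−η}. -/
open scoped BigOperators

/-- Tail estimate: for perturbations of order `δ < 1` the tail of the eigenvalue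
expansion is `O(j^{-η})` uniformly for `|ε| < ε₀`. -/
theorem stmt12 (δ C ω : ℝ) (hδ0 : 0 ≤ δ) (hδ1 : δ < 1) (hC : 0 < C) (hω : ω ≠ 0)
    (γ : ℕ → ℝ) (hγ : ∀ j : ℕ, 1 ≤ j → |γ j| ≤ C * (j:ℝ) ^ δ)
    (a : ℕ → ℝ) (ha : ∀ k : ℕ, 1 ≤ k → |a k| ≤ 1/2) :
    ∃ η > (0:ℝ), ∃ ε₀ > (0:ℝ), ∃ j₀ N : ℕ, 1 ≤ j₀ ∧ 1 ≤ N ∧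
      ∀ j : ℕ, j₀ ≤ j → ∀ ε : ℝ, |ε| < ε₀ →
        Summable (fun k : ℕ =>
          |γ j| ^ (2*(N+1+k)) * |a (N+1+k)| * |ε| ^ (2*(N+1+k)) /
            (|ω| * j) ^ (2*(N+1+k) - 1)) ∧
        (∑' k : ℕ, |γ j| ^ (2*(N+1+k)) * |a (N+1+k)| * |ε| ^ (2*(N+1+k)) /
            (|ω| * j) ^ (2*(N+1+k) - 1)) ≤ (j:ℝ) ^ (-η) := by
  have hw : 0 < |ω| := abs_pos.mpr hω
  obtain ⟨q, hq⟩ : ∃ q : ℝ, q = 1 / (2 + |ω|) := ⟨_, rfl⟩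
  have hq0 : 0 < q := by rw [hq]; positivity
  have hq2 : q ≤ 1 / 2 := by
    rw [hq]; exact one_div_le_one_div_of_le (by norm_num) (by linarith)
  have hqw : |ω| * q ≤ 1 := by
    rw [hq, mul_one_div, div_le_one (by positivity)]; linarith
  have hs : 0 < 1 - δ := by linarith
  obtain ⟨N, hN⟩ := exists_nat_ge (1 / (1 - δ))
  have hN' : 1 ≤ N * (1 - δ) := by rwa [div_le_iff₀ hs] at hN
  have hN1 : 1 ≤ N := by
    rcases Nat.eq_zero_or_pos N with h | h
    · subst h; norm_num at hN'
    · exact h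
  refine ⟨1, one_pos, q * |ω| / C, by positivity, 1, N, le_rfl, hN1, ?_⟩
  intro j hj ε hε
  have hj1 : (1:ℝ) ≤ j := by exact_mod_cast hj
  have hj0 : (0:ℝ) < j := by linarith
  have hW : 0 < |ω| * j := by positivity
  obtain ⟨u, hu⟩ : ∃ u : ℝ, u = (j:ℝ) ^ (-(1 - δ)) := ⟨_, rfl⟩
  have hu0 : 0 < u := by rw [hu]; positivity
  have hu1 : u ≤ 1 := by
    rw [hu]; exact Real.rpow_le_one_of_one_le_of_nonpos hj1 (by linarith)
  have huj : u * j = (j:ℝ) ^ δ := by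
    rw [hu]
    nth_rewrite 2 [← Real.rpow_one (j:ℝ)]
    rw [← Real.rpow_add hj0]; congr 1; ring
  have huN : u ^ N ≤ 1 / j := by
    rw [hu, ← Real.rpow_natCast, ← Real.rpow_mul hj0.le, one_div, ← Real.rpow_neg_one]
    exact Real.rpow_le_rpow_of_exponent_le hj1 (by nlinarith)
  have hx : |γ j| * |ε| ≤ q * u * (|ω| * j) := by
    calc |γ j| * |ε| ≤ (C * (j:ℝ) ^ δ) * (q * |ω| / C) :=
          mul_le_mul (hγ j hj) hε.le (abs_nonneg _) (by positivity)
      _ = q * u * (|ω| * j) := by rw [← huj]; field_simp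
  have hg : HasSum (fun k : ℕ => (1 / 2 * (1 / (j:ℝ))) * (1 / 2 : ℝ) ^ k)
      ((1 / 2 * (1 / (j:ℝ))) * 2) := hasSum_geometric_two.mul_left _
  have hnn : ∀ k : ℕ, 0 ≤ |γ j| ^ (2*(N+1+k)) * |a (N+1+k)| * |ε| ^ (2*(N+1+k)) /
            (|ω| * j) ^ (2*(N+1+k) - 1) := fun k => by positivity
  have hb : ∀ k : ℕ, |γ j| ^ (2*(N+1+k)) * |a (N+1+k)| * |ε| ^ (2*(N+1+k)) /
            (|ω| * j) ^ (2*(N+1+k) - 1) ≤ (1 / 2 * (1 / (j:ℝ))) * (1 / 2 : ℝ) ^ k := by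
    intro k
    rw [div_le_iff₀ (by positivity)]
    obtain ⟨m, hm⟩ : ∃ m, m = 2 * (N+1+k) - 1 := ⟨_, rfl⟩
    have hm' : 2 * (N+1+k) = m + 1 := by omega
    rw [← hm, hm']
    have h1 : (|γ j| * |ε|) ^ (m+1) ≤ (q * u * (|ω| * j)) ^ (m+1) :=
      pow_le_pow_left₀ (by positivity) hx _
    have h2 : q ^ (m+1) ≤ q * (1/2) ^ k :=
      calc q ^ (m+1) ≤ q ^ (k+1) :=
            pow_le_pow_of_le_one hq0.le (by linarith) (by omega)
        _ = q * q ^ k := by ring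
        _ ≤ q * (1/2) ^ k := by gcongr
    have h3 : u ^ (m+1) ≤ 1 / j * (1 / j) :=
      calc u ^ (m+1) ≤ u ^ (N + N) :=
            pow_le_pow_of_le_one hu0.le hu1 (by omega)
        _ = u ^ N * u ^ N := by ring
        _ ≤ 1 / j * (1 / j) := by gcongr
    calc |γ j| ^ (m+1) * |a (N+1+k)| * |ε| ^ (m+1)
        = |a (N+1+k)| * (|γ j| * |ε|) ^ (m+1) := by ring
      _ ≤ 1 / 2 * (q * u * (|ω| * j)) ^ (m+1) :=
          mul_le_mul (ha _ (by omega)) h1 (by positivity) (by norm_num)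
      _ = 1 / 2 * (q ^ (m+1) * u ^ (m+1)) * (|ω| * j) * (|ω| * j) ^ m := by ring
      _ ≤ 1 / 2 * ((q * (1/2) ^ k) * (1 / j * (1 / j))) * (|ω| * j) * (|ω| * j) ^ m := by
          gcongr
      _ = (|ω| * q) * (1 / 2 * (1 / (j:ℝ)) * (1 / 2 : ℝ) ^ k * (|ω| * j) ^ m) := by
          generalize (|ω| * (j:ℝ)) ^ m = Z
          field_simp
      _ ≤ 1 * (1 / 2 * (1 / (j:ℝ)) * (1 / 2 : ℝ) ^ k * (|ω| * j) ^ m) := by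
          gcongr
      _ = _ := one_mul _
  have hS := Summable.of_nonneg_of_le hnn hb hg.summable
  refine ⟨hS, (hS.tsum_le_tsum hb hg.summable).trans ?_⟩
  rw [hg.tsum_eq, Real.rpow_neg_one]
  apply le_of_eq
  ring
end

section
/- Let α, β ∈ ℝ. The following are equivalent: (i) there exist constants C > 0, θ > 0 and j₀ such that for every integer j ≥ j₀ and every integer τ, √((τ + jα)² + j²β²) ≥ C j^{−θ}; (ii) β ≠ 0, or α is irrational and α is not a Liouville number. -/
/-- The Diophantine condition characterizing global hypoellipticity of
`D_t + (α + iβ) D_x` on `𝕋²`: it holds iff `β ≠ 0` or `α` is an irrational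
non-Liouville number. -/
theorem stmt14 (α β : ℝ) :
    (∃ C > (0:ℝ), ∃ θ > (0:ℝ), ∃ j₀ : ℕ, ∀ j : ℕ, j₀ ≤ j → ∀ τ : ℤ,
        Real.sqrt (((τ:ℝ) + j * α)^2 + (j:ℝ)^2 * β^2) ≥ C * (j:ℝ) ^ (-θ)) ↔
      (β ≠ 0 ∨ (Irrational α ∧ ¬ Liouville α)) := by
  constructor
  · rintro ⟨C, hC, θ, hθ, j₀, H⟩
    by_cases hβ : β = 0
    swap
    · exact Or.inl hβ
    right
    subst hβ
    have H' : ∀ j : ℕ, j₀ ≤ j → ∀ τ : ℤ, C * (j:ℝ) ^ (-θ) ≤ |(τ:ℝ) + j * α| := by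
      intro j hj τ
      have := H j hj τ
      rw [← Real.sqrt_sq_eq_abs]
      simpa using this
    constructor
    · rintro ⟨r, rfl⟩
      have hq : 0 < r.den := r.den_pos
      have h := H' (r.den * (j₀ + 1)) (by nlinarith) (-(r.num * (j₀ + 1)))
      have h0 : ((-(r.num * (j₀ + 1)) : ℤ) : ℝ) + ((r.den * (j₀ + 1) : ℕ) : ℝ) * (r : ℝ) = 0 := by
        have hq' : (r.den : ℝ) ≠ 0 := by positivity
        rw [Rat.cast_def r]
        push_cast
        field_simp
        ring
      rw [h0, abs_zero] at h
      have hpos : (0:ℝ) < ((r.den * (j₀ + 1) : ℕ) : ℝ) := by positivity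
      have := mul_pos hC (Real.rpow_pos_of_pos hpos (-θ))
      linarith
    · intro hL
      obtain ⟨n, hn⟩ := exists_nat_ge (θ + 2)
      obtain ⟨m, hm⟩ := exists_nat_gt (1 / C)
      obtain ⟨b, hb, a, -, hlt⟩ :=
        ((Filter.eventually_ge_atTop (j₀ + m + 1)).and_frequently
          (hL.frequently_exists_num n)).exists
      have h := H' b (by omega) (-a)
      have hb1 : (1:ℝ) ≤ b := by exact_mod_cast (by omega : 1 ≤ b)
      have hbm : (m:ℝ) ≤ b := by exact_mod_cast (by omega : m ≤ b)
      have hb0 : (0:ℝ) < b := by linarith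
      have e1 : ((-a : ℤ) : ℝ) + b * α = b * (α - a / b) := by
        push_cast
        field_simp
        ring
      rw [e1, abs_mul, abs_of_pos hb0] at h
      have h2 : (1:ℝ) / (b:ℝ) ^ n ≤ (b:ℝ) ^ (-θ) / (b * b) := by
        have : (b:ℝ) ^ (-θ) / (b * b) = (b:ℝ) ^ (-θ - 2) := by
          rw [Real.rpow_sub hb0, Real.rpow_two, sq]
        rw [this, one_div, ← Real.rpow_natCast, ← Real.rpow_neg hb0.le]
        exact Real.rpow_le_rpow_of_exponent_le hb1 (by linarith)
      have hp := Real.rpow_pos_of_pos hb0 (-θ)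
      have h3 : (b:ℝ) * |α - a / b| < (b:ℝ) ^ (-θ) / b := by
        calc (b:ℝ) * |α - a / b| < b * ((b:ℝ) ^ (-θ) / (b * b)) :=
              mul_lt_mul_of_pos_left (hlt.trans_le h2) hb0
          _ = _ := by field_simp
      have h4 : C * (b:ℝ) ^ (-θ) < (b:ℝ) ^ (-θ) / b := h.trans_lt h3
      rw [lt_div_iff₀ hb0] at h4
      have h5 : 1 < b * C := by
        rw [← div_lt_iff₀ hC]
        linarith
      nlinarith
  · intro h
    by_cases hβ : β = 0
    · obtain ⟨hI, hL⟩ := h.resolve_left (by simpa using hβ)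
      subst hβ
      unfold Liouville at hL
      push Not at hL
      obtain ⟨n, hn⟩ := hL
      refine ⟨1, one_pos, n + 1, by positivity, 2, fun j hj τ => ?_⟩
      have hj1 : (1:ℝ) ≤ j := by exact_mod_cast (by omega : 1 ≤ j)
      have hj0 : (0:ℝ) < j := by linarith
      have h := hn (-τ) j (by omega) (by
        intro hh
        exact hI ⟨((-τ : ℤ) : ℚ) / ((j : ℤ) : ℚ), by rw [hh]; push_cast; rfl⟩)
      have e1 : (τ : ℝ) + j * α = j * (α - ((-τ : ℤ) : ℝ) / ((j : ℤ) : ℝ)) := by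
        push_cast
        field_simp
        ring
      have e2 : Real.sqrt (((τ:ℝ) + j * α)^2 + (j:ℝ)^2 * 0^2) = |(τ:ℝ) + j * α| := by
        rw [← Real.sqrt_sq_eq_abs]
        simp
      rw [e2, e1, abs_mul, abs_of_pos hj0, one_mul]
      have h2 : (j:ℝ) ^ (-((n:ℝ) + 1)) ≤ 1 / (j:ℝ) ^ n := by
        rw [one_div, ← Real.rpow_natCast, ← Real.rpow_neg hj0.le]
        exact Real.rpow_le_rpow_of_exponent_le hj1 (by linarith)
      have h3 : (j:ℝ) ^ (-((n:ℝ) + 1)) ≤ |α - ((-τ : ℤ) : ℝ) / ((j : ℤ) : ℝ)| :=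
        h2.trans (by simpa using h)
      exact h3.trans (le_mul_of_one_le_left (abs_nonneg _) hj1)
    · refine ⟨|β|, abs_pos.mpr hβ, 1, one_pos, 1, fun j hj τ => ?_⟩
      have hj1 : (1:ℝ) ≤ j := by exact_mod_cast hj
      have h1 : (j:ℝ) ^ (-1:ℝ) ≤ 1 := Real.rpow_le_one_of_one_le_of_nonpos hj1 (by norm_num)
      have h2 : |β| ≤ Real.sqrt (((τ:ℝ) + j * α)^2 + (j:ℝ)^2 * β^2) := by
        apply Real.abs_le_sqrt
        have : 1 ≤ (j:ℝ)^2 := by nlinarith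
        nlinarith [sq_nonneg ((τ:ℝ) + j * α), sq_nonneg β]
      exact (mul_le_of_le_one_right (abs_nonneg β) h1).trans h2
end
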